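/- Let N be the Newton polygon of a finite set S ⊂ ℝ≥0 × ℝ≥0 and μ > 0. If the supporting line L_μ of co-slope μ meets N in a segment (not a single point), then for any μ' > μ, the maximal ordinate of points of N on the supporting line L_{μ'} is strictly smaller than the maximal ordinate of points of N on L_μ. -/

import Mathlib

/-!
For `a, r ∈ N` with `a` on the supporting line of co-slope `μ` and `r` on that of co-slope `μ' > μ`,
minimality gives `a.1 + μ * a.2 ≤ r.1 + μ * r.2` and `r.1 + μ' * r.2 ≤ a.1 + μ' * a.2`; adding them
yields `(μ' - μ) * r.2 ≤ (μ' - μ) * a.2`, so `r` is no higher than `a`. Applied to the lower of two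
distinct points of the side of co-slope `μ`, this puts every point of the other supporting line
strictly below the upper one. Since `N` lies in the first quadrant, the infima and suprema involved
are those of suitably bounded sets.
-/

noncomputable def newtonPolygon (S : Set (ℝ × ℝ)) : Set (ℝ × ℝ) :=
  convexHull ℝ (⋃ p ∈ S, {q : ℝ × ℝ | p.1 ≤ q.1 ∧ p.2 ≤ q.2})

noncomputable def tau (N : Set (ℝ × ℝ)) (μ : ℝ) : ℝ :=
  sInf ((fun q : ℝ × ℝ => q.1 + μ * q.2) '' N)

noncomputable def heightOn (N : Set (ℝ × ℝ)) (μ : ℝ) : ℝ :=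
  sSup {v : ℝ | ∃ u : ℝ, (u, v) ∈ N ∧ u + μ * v = tau N μ}

theorem newtonPolygon_nonneg {S : Set (ℝ × ℝ)} (hpos : ∀ p ∈ S, 0 ≤ p.1 ∧ 0 ≤ p.2)
    {q : ℝ × ℝ} (hq : q ∈ newtonPolygon S) : 0 ≤ q.1 ∧ 0 ≤ q.2 := by
  have hsub : newtonPolygon S ⊆ Set.Ici (0 : ℝ × ℝ) := by
    refine convexHull_min ?_ (convex_Ici 0)
    intro x hx
    simp only [Set.mem_iUnion, Set.mem_ofPred_eq] at hx
    obtain ⟨p, hp, h1, h2⟩ := hx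
    exact ⟨(hpos p hp).1.trans h1, (hpos p hp).2.trans h2⟩
  exact hsub hq

theorem tau_le {N : Set (ℝ × ℝ)} (hN : ∀ q ∈ N, 0 ≤ q.1 ∧ 0 ≤ q.2) {μ : ℝ} (hμ : 0 < μ)
    {q : ℝ × ℝ} (hq : q ∈ N) : tau N μ ≤ q.1 + μ * q.2 := by
  refine csInf_le ⟨0, ?_⟩ ⟨q, hq, rfl⟩
  rintro _ ⟨r, hr, rfl⟩
  obtain ⟨h1, h2⟩ := hN r hr
  positivity

/-- The case of the theorem in which the two points `a`, `b` of the side are labelled by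
height. -/
theorem heightOn_lt_of_lt {N : Set (ℝ × ℝ)} (hN : ∀ q ∈ N, 0 ≤ q.1 ∧ 0 ≤ q.2) {μ μ' : ℝ}
    (hμ : 0 < μ) (hlt : μ < μ') {a b : ℝ × ℝ} (ha : a ∈ N) (hb : b ∈ N)
    (hae : a.1 + μ * a.2 = tau N μ) (hbe : b.1 + μ * b.2 = tau N μ) (hab : a.2 < b.2) :
    heightOn N μ' < heightOn N μ := by
  have hupper : heightOn N μ' ≤ a.2 := by
    -- `Real.sSup_le` allows the set to be empty, as `0 ≤ a.2`; attainment of `tau N μ'` is not needed.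
    refine Real.sSup_le ?_ (hN a ha).2
    rintro v ⟨u, huv, he⟩
    have h1 := tau_le hN hμ huv
    have h2 := tau_le hN (hμ.trans hlt) ha
    dsimp only at h1
    refine le_of_mul_le_mul_left ?_ (sub_pos.2 hlt)
    linarith
  have hlower : b.2 ≤ heightOn N μ := by
    refine le_csSup ⟨tau N μ / μ, ?_⟩ ⟨b.1, hb, hbe⟩
    rintro v ⟨u, huv, he⟩
    have hu : 0 ≤ u := (hN _ huv).1
    rw [le_div_iff₀ hμ]
    linarith
  exact hupper.trans_lt (hab.trans_le hlower)

/-- if the supporting line of co-slope μ meets N along a segment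
(not a single point), then for μ' > μ the maximal ordinate on the supporting
line of co-slope μ' is strictly smaller. -/
theorem stmt_6 (S : Finset (ℝ × ℝ)) (hS : S.Nonempty)
    (hpos : ∀ p ∈ S, 0 ≤ p.1 ∧ 0 ≤ p.2)
    (N : Set (ℝ × ℝ)) (hN : N = newtonPolygon (S : Set (ℝ × ℝ)))
    (μ : ℝ) (hμ : 0 < μ)
    (hside : ∃ p q : ℝ × ℝ, p ≠ q ∧ p ∈ N ∧ q ∈ N ∧
      p.1 + μ * p.2 = tau N μ ∧ q.1 + μ * q.2 = tau N μ)
    (μ' : ℝ) (hlt : μ < μ') :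
    heightOn N μ' < heightOn N μ := by
  have hnn : ∀ q ∈ N, 0 ≤ q.1 ∧ 0 ≤ q.2 := fun q hq =>
    newtonPolygon_nonneg (S := (S : Set (ℝ × ℝ))) (fun p hp => hpos p (Finset.mem_coe.1 hp))
      (hN ▸ hq)
  obtain ⟨p, q, hpq, hp, hq, hpe, hqe⟩ := hside
  -- Distinct points of a line of finite co-slope have distinct ordinates.
  have hne : p.2 ≠ q.2 := by
    intro h
    refine hpq (Prod.ext ?_ h)
    rw [h] at hpe
    linarith
  rcases lt_or_gt_of_ne hne with h | h
  · exact heightOn_lt_of_lt hnn hμ hlt hp hq hpe hqe h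
  · exact heightOn_lt_of_lt hnn hμ hlt hq hp hqe hpe h
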